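/- Let K be a field and A an associative K-algebra. A is smooth over K (i.e. A is a perfect module over A^op ⊗_K A) if and only if A ⊗_K Kbar is smooth over the algebraic closure Kbar of K. -/

import Mathlib

open CategoryTheory TensorProduct

universe u

/-- `M` has projective dimension at most `n`. -/
def HasProjDimLE (A : Type u) [Ring A] (M : ModuleCat.{u} A) (n : ℕ) : Prop :=
  ∃ P : ProjectiveResolution M, ∀ i, n < i → Limits.IsZero (P.complex.X i)

/-- The diagonal bimodule structure: `A` as a module over its enveloping algebra
`Aᵐᵒᵖ ⊗[K] A`, via `(op a ⊗ b) • x = b * x * a`. -/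
noncomputable instance envModule (K A : Type u) [CommRing K] [Ring A] [Algebra K A] :
    Module (Aᵐᵒᵖ ⊗[K] A) A :=
  TensorProduct.Algebra.module (R := K) (A := Aᵐᵒᵖ) (B := A) (M := A)


/-- `A` is smooth over `K`: `A` is flat over `K` and perfect (of finite projective
dimension) as a module over the enveloping algebra `Aᵐᵒᵖ ⊗[K] A`. -/
def SmoothOver (K A : Type u) [CommRing K] [Ring A] [Algebra K A] : Prop :=
  Module.Flat K A ∧
    ∃ n : ℕ, HasProjDimLE (Aᵐᵒᵖ ⊗[K] A) (ModuleCat.of (Aᵐᵒᵖ ⊗[K] A) A) n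

attribute [local instance] Algebra.TensorProduct.rightAlgebra

/-!
A module has projective dimension at most `n` exactly when it has a projective resolution of length
`n`: resolutions of the first syzygy can be spliced into the presentation. Forming enveloping
algebras commutes with base change, so the question is how the projective dimension of an
`R`-module `M` compares with that of the `R ⊗[K] L`-module `M ⊗[K] L`.

If `L` is flat over `K`, then `- ⊗[K] L` is exact, and it carries projective `R`-modules to
projective `R ⊗[K] L`-modules, so projective dimension does not increase. Conversely, if `L` is
projective over `K`, then `R ⊗[K] L` is projective over `R`, so restricting scalars to `R` does not
increase projective dimension either; and if `1` moreover splits off `L`, then `M` is a retract of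
`M ⊗[K] L` over `R`. Such a splitting exists as soon as `L` is projective and faithfully flat.
-/

section ProjectiveResolutions

open Limits

variable {C : Type*} [Category* C] [Abelian C]

/-- The projective resolution of `Z` given by a chain complex of projectives that is exact in
positive degrees, together with an augmentation `f` exhibiting `Z` as the cokernel of `d 1 0`. -/
noncomputable def projectiveResolutionOfExact {Z : C} (D : ChainComplex C ℕ)
    (hD : ∀ i, Projective (D.X i)) (f : D.X 0 ⟶ Z) (hf : Epi f) (w : D.d 1 0 ≫ f = 0)
    (hw : (ShortComplex.mk _ _ w).Exact) (hex : ∀ i, D.ExactAt (i + 1)) :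
    ProjectiveResolution Z where
  complex := D
  projective := hD
  π := (ChainComplex.toSingle₀Equiv _ _).symm ⟨f, w⟩
  quasiIso := ⟨fun i ↦ by
    cases i with
    | zero =>
      rw [ChainComplex.quasiIsoAt₀_iff,
        ShortComplex.quasiIso_iff_of_zeros' _ (D.shape _ _ (by simp)) (by rfl) (by rfl)]
      have hπ : ((ChainComplex.toSingle₀Equiv D Z).symm ⟨f, w⟩).f 0 = f :=
        ChainComplex.toSingle₀Equiv_symm_apply_f_zero f w
      refine (ShortComplex.exact_and_epi_g_iff_of_iso ?_).2 ⟨hw, hf⟩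
      exact ShortComplex.isoMk (Iso.refl _) (Iso.refl _) (Iso.refl _)
        ((Category.id_comp _).trans (Category.comp_id _).symm)
        ((Category.id_comp f).trans (hπ.symm.trans (Category.comp_id _).symm))
    | succ i =>
      rw [quasiIsoAt_iff_exactAt' _ _ (ChainComplex.exactAt_succ_single_obj _ _)]
      exact hex i⟩

/-- The augmentation `P₀ ⟶ X` of a projective resolution `P` of `X`. -/
noncomputable def augmentation {X : C} (P : ProjectiveResolution X) : P.complex.X 0 ⟶ X :=
  P.π.f 0

theorem epi_augmentation {X : C} (P : ProjectiveResolution X) : Epi (augmentation P) :=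
  inferInstanceAs (Epi (P.π.f 0))

theorem d_comp_augmentation {X : C} (P : ProjectiveResolution X) :
    P.complex.d 1 0 ≫ augmentation P = 0 :=
  P.complex_d_comp_π_f_zero

variable {S : ShortComplex C} (Q : ProjectiveResolution S.X₁)

/-- The chain complex `⋯ ⟶ Q₁ ⟶ Q₀ ⟶ X₂` obtained from a resolution `Q` of `X₁` by splicing it
with a morphism `X₁ ⟶ X₂`. -/
noncomputable def spliceComplex : ChainComplex C ℕ :=
  Q.complex.augment (augmentation Q ≫ S.f) (by rw [reassoc_of% d_comp_augmentation Q, zero_comp])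

theorem spliceComplex_d_one_zero_comp : (spliceComplex Q).d 1 0 ≫ S.g = 0 := by
  change (augmentation Q ≫ S.f) ≫ S.g = 0
  rw [Category.assoc, S.zero, comp_zero]

theorem spliceComplex_exact_zero (hS : S.Exact) :
    (ShortComplex.mk _ _ (spliceComplex_d_one_zero_comp Q)).Exact := by
  let φ : ShortComplex.mk _ _ (spliceComplex_d_one_zero_comp Q) ⟶ S :=
    { τ₁ := augmentation Q
      τ₂ := 𝟙 _
      τ₃ := 𝟙 _
      comm₁₂ := (Category.comp_id _).symm
      comm₂₃ := (Category.id_comp _).trans (Category.comp_id _).symm }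
  have : Epi φ.τ₁ := epi_augmentation Q
  have : IsIso φ.τ₂ := inferInstanceAs (IsIso (𝟙 _))
  have : Mono φ.τ₃ := inferInstanceAs (Mono (𝟙 _))
  exact (ShortComplex.exact_iff_of_epi_of_isIso_of_mono φ).2 hS

theorem spliceComplex_exactAt_succ (hS : Mono S.f) (i : ℕ) :
    (spliceComplex Q).ExactAt (i + 1) := by
  rw [HomologicalComplex.exactAt_iff' _ (i + 1 + 1) (i + 1) i (by simp) (by simp)]
  cases i with
  | zero =>
    let φ : ShortComplex.mk _ _ (d_comp_augmentation Q) ⟶ (spliceComplex Q).sc' 2 1 0 :=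
      { τ₁ := 𝟙 _
        τ₂ := 𝟙 _
        τ₃ := S.f
        comm₁₂ := (Category.id_comp _).trans (Category.comp_id _).symm
        comm₂₃ := Category.id_comp _ }
    have : Epi φ.τ₁ := inferInstanceAs (Epi (𝟙 _))
    have : IsIso φ.τ₂ := inferInstanceAs (IsIso (𝟙 _))
    have : Mono φ.τ₃ := hS
    exact (ShortComplex.exact_iff_of_epi_of_isIso_of_mono φ).1 Q.exact₀
  | succ i => exact Q.exact_succ i

/-- The projective resolution of the cokernel `X₃` of a short exact sequence with projective middle
term obtained from a projective resolution of `X₁`. -/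
noncomputable def spliceResolution (hS : S.ShortExact) (hX₂ : Projective S.X₂) :
    ProjectiveResolution S.X₃ :=
  projectiveResolutionOfExact (spliceComplex Q) (fun | 0 => hX₂ | i + 1 => Q.projective i) S.g
    hS.epi_g (spliceComplex_d_one_zero_comp Q) (spliceComplex_exact_zero Q hS.exact)
    (spliceComplex_exactAt_succ Q hS.mono_f)

theorem exists_projectiveResolution_isZero [EnoughProjectives C] (n : ℕ) (X : C)
    [HasProjectiveDimensionLE X n] :
    ∃ P : ProjectiveResolution X, ∀ i, n < i → IsZero (P.complex.X i) := by
  induction n generalizing X with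
  | zero =>
    have : Projective X := (projective_iff_hasProjectiveDimensionLE_zero X).2 ‹_›
    exact ⟨.self X, fun i hi ↦ HomologicalComplex.isZero_single_obj_X _ _ _ _ hi.ne'⟩
  | succ n ih =>
    let S := ShortComplex.mk (kernel.ι (Projective.π X)) (Projective.π X) (kernel.condition _)
    have hS : S.ShortExact := { exact := ShortComplex.exact_kernel _ }
    have hX₂ : Projective S.X₂ := Projective.projective_over X
    have := (hS.hasProjectiveDimensionLT_X₃_iff n hX₂).1 ‹_›
    obtain ⟨Q, hQ⟩ := ih S.X₁
    refine ⟨spliceResolution Q hS hX₂, fun i hi ↦ ?_⟩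
    obtain ⟨i, rfl⟩ := Nat.exists_eq_add_one_of_ne_zero hi.ne_bot
    exact hQ i (by lia)

theorem hasProjectiveDimensionLT_of_projectiveResolution {X : C} (P : ProjectiveResolution X)
    {n : ℕ} (hP : ∀ i, n ≤ i → IsZero (P.complex.X i)) : HasProjectiveDimensionLT X n := by
  let := HasExt.standard C
  refine (hasProjectiveDimensionLT_iff X n).2 fun i hi Y e ↦ ?_
  obtain ⟨f, hf, rfl⟩ := P.extMk_surjective e (i + 1) rfl
  obtain rfl : f = 0 := (hP i hi).eq_of_src _ _
  simp

theorem hasProjDimLE_iff_hasProjectiveDimensionLE {R : Type u} [Ring R] (M : ModuleCat.{u} R)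
    (n : ℕ) : HasProjDimLE R M n ↔ HasProjectiveDimensionLE M n :=
  ⟨fun ⟨P, hP⟩ ↦ hasProjectiveDimensionLT_of_projectiveResolution P hP,
    fun _ ↦ exists_projectiveResolution_isZero n M⟩

end ProjectiveResolutions

section ProjectiveDimension

variable {R S : Type u} [Ring R] [Ring S]

theorem hasProjectiveDimensionLE_zero_iff_projective {M : Type u} [AddCommGroup M] [Module R M] :
    HasProjectiveDimensionLE (ModuleCat.of R M) 0 ↔ Module.Projective R M :=
  (projective_iff_hasProjectiveDimensionLE_zero _).symm.trans
    (IsProjective.iff_projective M).symm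

theorem hasProjectiveDimensionLE_succ_iff_of_exact {N P Q : Type u} [AddCommGroup N]
    [AddCommGroup P] [AddCommGroup Q] [Module R N] [Module R P] [Module R Q]
    [Module.Projective R P] {f : N →ₗ[R] P} {g : P →ₗ[R] Q} (hf : Function.Injective f)
    (hfg : Function.Exact f g) (hg : Function.Surjective g) (n : ℕ) :
    HasProjectiveDimensionLE (ModuleCat.of R Q) (n + 1) ↔
      HasProjectiveDimensionLE (ModuleCat.of R N) n :=
  (ModuleCat.shortComplex_shortExact (ModuleCat.shortComplexOfCompEqZero f g
      hfg.linearMap_comp_eq_zero) hfg hf hg).hasProjectiveDimensionLT_X₃_iff n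
    ((IsProjective.iff_projective P).1 inferInstance)

theorem hasProjectiveDimensionLE_succ_iff_ker_linearCombination {M : Type u} [AddCommGroup M]
    [Module R M] (n : ℕ) :
    HasProjectiveDimensionLE (ModuleCat.of R M) (n + 1) ↔
      HasProjectiveDimensionLE (ModuleCat.of R (Finsupp.linearCombination R (id : M → M)).ker) n :=
  hasProjectiveDimensionLE_succ_iff_of_exact (Submodule.injective_subtype _)
    (LinearMap.exact_subtype_ker_map _) (Finsupp.linearCombination_id_surjective R M) n

theorem projective_restrictScalars [Module R S] [IsScalarTower R S S] [Module.Projective R S]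
    (P : Type*) [AddCommGroup P] [Module R P] [Module S P] [IsScalarTower R S P]
    [Module.Projective S P] : Module.Projective R P := by
  classical
  have : Module.Projective R (P →₀ S) := .of_equiv' (finsuppLequivDFinsupp R).symm
  obtain ⟨s, hs⟩ := Module.projective_def'.1 ‹Module.Projective S P›
  exact .of_split (s.restrictScalars R) ((Finsupp.linearCombination S id).restrictScalars R)
    (LinearMap.ext fun x ↦ congr($hs x))

theorem hasProjectiveDimensionLE_restrictScalars [Module R S] [IsScalarTower R S S]
    [Module.Projective R S] (N : Type u) [AddCommGroup N] [Module R N] [Module S N]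
    [IsScalarTower R S N] (n : ℕ) [HasProjectiveDimensionLE (ModuleCat.of S N) n] :
    HasProjectiveDimensionLE (ModuleCat.of R N) n := by
  induction n generalizing N with
  | zero =>
    rw [hasProjectiveDimensionLE_zero_iff_projective] at *
    exact projective_restrictScalars (S := S) N
  | succ n ih =>
    let g : (N →₀ S) →ₗ[S] N := Finsupp.linearCombination S id
    have := hasProjectiveDimensionLE_succ_iff_ker_linearCombination n |>.1 ‹_›
    have : Module.Projective R (N →₀ S) := projective_restrictScalars (S := S) _
    exact (hasProjectiveDimensionLE_succ_iff_of_exact (f := g.ker.subtype.restrictScalars R)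
      (g := g.restrictScalars R) g.ker.injective_subtype g.exact_subtype_ker_map
      (Finsupp.linearCombination_id_surjective S N) n).2 (ih g.ker)

theorem hasProjectiveDimensionLE_of_retract {M N : Type u} [AddCommGroup M] [AddCommGroup N]
    [Module R M] [Module R N] {i : M →ₗ[R] N} {p : N →ₗ[R] M} (h : p ∘ₗ i = .id) (n : ℕ)
    [HasProjectiveDimensionLE (ModuleCat.of R N) n] :
    HasProjectiveDimensionLE (ModuleCat.of R M) n :=
  Retract.hasProjectiveDimensionLT (Y := ModuleCat.of R N)
    { i := ModuleCat.ofHom i, r := ModuleCat.ofHom p, retract := ModuleCat.hom_ext h } (n + 1)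

attribute [local instance] RingHomInvPair.of_ringEquiv in
theorem hasProjectiveDimensionLE_iff_of_ringEquiv (e : R ≃+* S) {M : Type u} [AddCommGroup M]
    [Module R M] [Module S M] (h : ∀ (r : R) (x : M), e r • x = r • x) (n : ℕ) :
    HasProjectiveDimensionLE (ModuleCat.of R M) n ↔
      HasProjectiveDimensionLE (ModuleCat.of S M) n := by
  let e₁ : ModuleCat.of R M ≃ₛₗ[RingHomClass.toRingHom e] ModuleCat.of S M :=
    { AddEquiv.refl M with map_smul' r x := (h r x).symm }
  let e₂ : ModuleCat.of S M ≃ₛₗ[RingHomClass.toRingHom e.symm] ModuleCat.of R M :=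
    { AddEquiv.refl M with map_smul' s x := by simpa using h (e.symm s) x }
  exact ⟨fun _ ↦ ModuleCat.hasProjectiveDimensionLE_of_semiLinearEquiv e e₁ n,
    fun _ ↦ ModuleCat.hasProjectiveDimensionLE_of_semiLinearEquiv e.symm e₂ n⟩

end ProjectiveDimension

section BaseChange

variable {K R L M N P X : Type*} [CommRing K] [Ring R] [Algebra K R] [Ring L] [Algebra K L]
  [AddCommGroup M] [Module K M] [Module R M] [IsScalarTower K R M]
  [AddCommGroup N] [Module K N] [Module R N] [IsScalarTower K R N]
  [AddCommGroup P] [Module K P] [Module R P] [IsScalarTower K R P]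

variable (K R L M) in
/-- The action of `R ⊗[K] L` on `M ⊗[K] L` for an `R`-module `M`, acting factor by factor. It has
low priority so that `R ⊗[K] L` itself keeps its regular module structure. -/
noncomputable instance (priority := 100) tensorModule : Module (R ⊗[K] L) (M ⊗[K] L) :=
  Module.compHom (M ⊗[K] L)
    ((Module.endTensorEndAlgHom (R := K) (S := K) (A := K) (M := M) (N := L)).comp
      (Algebra.TensorProduct.map (Algebra.lsmul K K M) (Algebra.lsmul K K L))).toRingHom

theorem tmul_smul_tmul (r : R) (l x : L) (m : M) :
    (r ⊗ₜ[K] l) • (m ⊗ₜ[K] x) = (r • m) ⊗ₜ[K] (l * x) := rfl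

theorem one_tmul_smul_tmul_one (l : L) (m : M) :
    ((1 : R) ⊗ₜ[K] l) • (m ⊗ₜ[K] (1 : L)) = m ⊗ₜ[K] l := by
  rw [tmul_smul_tmul, one_smul, mul_one]

theorem smul_eq_tensorModule_smul {B : Type*} [Semiring B] [Module B (M ⊗[K] L)]
    (φ : R ⊗[K] L →+ B)
    (h : ∀ (r : R) (l : L) (m : M) (x : L), φ (r ⊗ₜ l) • (m ⊗ₜ[K] x) = (r • m) ⊗ₜ (l * x))
    (t : R ⊗[K] L) (y : M ⊗[K] L) : φ t • y = t • y := by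
  induction t with
  | zero => simp
  | add s t hs ht => rw [map_add, add_smul, hs, ht, add_smul]
  | tmul r l =>
    induction y with
    | zero => simp
    | add x y hx hy => rw [smul_add, hx, hy, smul_add]
    | tmul m x => rw [h, tmul_smul_tmul]

instance isScalarTower_tensorModule : IsScalarTower R (R ⊗[K] L) (M ⊗[K] L) where
  smul_assoc r t x := by
    induction t with
    | zero => simp
    | add a b ha hb => rw [smul_add, add_smul, ha, hb, add_smul, smul_add]
    | tmul s l =>
      induction x with
      | zero => simp
      | add x y hx hy => rw [smul_add, hx, hy, smul_add, smul_add]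
      | tmul m y => rw [smul_tmul', tmul_smul_tmul, tmul_smul_tmul, smul_tmul', smul_assoc]

/-- The base change `f ⊗ L` of an `R`-linear map, as an `R ⊗[K] L`-linear map. -/
noncomputable def rTensorMap (f : M →ₗ[R] N) : M ⊗[K] L →ₗ[R ⊗[K] L] N ⊗[K] L where
  __ := (f.restrictScalars K).rTensor L
  map_smul' t x := by
    induction t with
    | zero => simp
    | add a b ha hb => simp_all [add_smul]
    | tmul r l =>
      induction x with
      | zero => simp
      | add a b ha hb => simp_all [smul_add]
      | tmul m y => simp [tmul_smul_tmul]

theorem rTensorMap_exact {f : M →ₗ[R] N} {g : N →ₗ[R] P} (h : Function.Exact f g)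
    (hg : Function.Surjective g) :
    Function.Exact (rTensorMap (K := K) (L := L) f) (rTensorMap (K := K) (L := L) g) :=
  rTensor_exact (f := f.restrictScalars K) (g := g.restrictScalars K) L h hg

theorem rTensorMap_injective [Module.Flat K L] {f : M →ₗ[R] N} (h : Function.Injective f) :
    Function.Injective (rTensorMap (K := K) (L := L) f) :=
  Module.Flat.rTensor_preserves_injective_linearMap (f.restrictScalars K) h

theorem rTensorMap_surjective {f : M →ₗ[R] N} (h : Function.Surjective f) :
    Function.Surjective (rTensorMap (K := K) (L := L) f) :=
  LinearMap.rTensor_surjective L (g := f.restrictScalars K) h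

section Lift

variable [AddCommGroup X] [Module K X] [Module R X] [Module (R ⊗[K] L) X] [IsScalarTower K R X]
  [IsScalarTower R (R ⊗[K] L) X] [IsScalarTower K (R ⊗[K] L) X]

/-- The `R ⊗[K] L`-linear extension `m ⊗ l ↦ (1 ⊗ l) • h m` of an `R`-linear map `h` from `M` to an
`R ⊗[K] L`-module. -/
noncomputable def tensorLift (h : M →ₗ[R] X) : M ⊗[K] L →ₗ[R ⊗[K] L] X where
  __ := TensorProduct.lift <| LinearMap.mk₂ K
    (fun m l ↦ ((1 : R) ⊗ₜ[K] l) • h m) (by simp)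
    (fun k m l ↦ by
      rw [← algebraMap_smul R k m, h.map_smul, algebraMap_smul, smul_comm])
    (by simp [tmul_add, add_smul]) (by simp)
  map_smul' t x := by
    dsimp
    induction t with
    | zero => simp
    | add a b ha hb => rw [add_smul, map_add, ha, hb, add_smul]
    | tmul r l =>
      induction x with
      | zero => simp
      | add a b ha hb => rw [smul_add, map_add, ha, hb, map_add, smul_add]
      | tmul m y =>
        rw [tmul_smul_tmul, lift.tmul, lift.tmul, LinearMap.mk₂_apply, LinearMap.mk₂_apply,
          h.map_smul, ← smul_one_smul (R ⊗[K] L) r, smul_smul, smul_smul,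
          Algebra.TensorProduct.one_def, smul_tmul', Algebra.TensorProduct.tmul_mul_tmul,
          Algebra.TensorProduct.tmul_mul_tmul]
        simp

theorem tensorLift_tmul (h : M →ₗ[R] X) (m : M) (l : L) :
    tensorLift h (m ⊗ₜ[K] l) = ((1 : R) ⊗ₜ[K] l) • h m := rfl

end Lift

theorem projective_tensor [Module.Projective R M] :
    Module.Projective (R ⊗[K] L) (M ⊗[K] L) := by
  obtain ⟨s, hs⟩ := Module.projective_def'.1 ‹Module.Projective R M›
  let j : (M →₀ R) →ₗ[R] M →₀ R ⊗[K] L :=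
    Finsupp.mapRange.linearMap (LinearMap.toSpanSingleton R (R ⊗[K] L) 1)
  let p : (M →₀ R ⊗[K] L) →ₗ[R ⊗[K] L] M ⊗[K] L :=
    Finsupp.linearCombination (R ⊗[K] L) fun m ↦ m ⊗ₜ 1
  have hp (f : M →₀ R) : p (j f) = Finsupp.linearCombination R id f ⊗ₜ 1 := by
    induction f using Finsupp.induction_linear with
    | zero => simp
    | add f g hf hg => simp only [map_add, hf, hg, add_tmul]
    | single m r => simp [j, p, smul_tmul']
  refine .of_split (tensorLift (j ∘ₗ s)) p (LinearMap.ext fun x ↦ ?_)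
  induction x with
  | zero => simp
  | add x y hx hy => rw [map_add, hx, hy, map_add]
  | tmul m l =>
    rw [LinearMap.comp_apply, tensorLift_tmul, map_smul, LinearMap.comp_apply, hp,
      show Finsupp.linearCombination R id (s m) = m from congr($hs m), one_tmul_smul_tmul_one,
      LinearMap.id_apply]

end BaseChange

section ProjectiveDimensionBaseChange

variable {K R L M : Type u} [CommRing K] [Ring R] [Algebra K R] [Ring L] [Algebra K L]
  [AddCommGroup M] [Module K M] [Module R M] [IsScalarTower K R M]

theorem hasProjectiveDimensionLE_tensor_succ_iff_of_exact [Module.Flat K L] {N P : Type u}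
    [AddCommGroup N] [Module K N] [Module R N] [IsScalarTower K R N] [AddCommGroup P] [Module K P]
    [Module R P] [IsScalarTower K R P] [Module.Projective R P] {f : N →ₗ[R] P} {g : P →ₗ[R] M}
    (hf : Function.Injective f) (hfg : Function.Exact f g) (hg : Function.Surjective g) (n : ℕ) :
    HasProjectiveDimensionLE (ModuleCat.of (R ⊗[K] L) (M ⊗[K] L)) (n + 1) ↔
      HasProjectiveDimensionLE (ModuleCat.of (R ⊗[K] L) (N ⊗[K] L)) n :=
  have : Module.Projective (R ⊗[K] L) (P ⊗[K] L) := projective_tensor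
  hasProjectiveDimensionLE_succ_iff_of_exact (rTensorMap_injective hf) (rTensorMap_exact hfg hg)
    (rTensorMap_surjective hg) n

variable (L) in
theorem hasProjectiveDimensionLE_tensor [Module.Flat K L] (n : ℕ)
    [HasProjectiveDimensionLE (ModuleCat.of R M) n] :
    HasProjectiveDimensionLE (ModuleCat.of (R ⊗[K] L) (M ⊗[K] L)) n := by
  induction n generalizing M with
  | zero =>
    rw [hasProjectiveDimensionLE_zero_iff_projective] at *
    exact projective_tensor
  | succ n ih =>
    let g : (M →₀ R) →ₗ[R] M := Finsupp.linearCombination R id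
    have := hasProjectiveDimensionLE_succ_iff_ker_linearCombination n |>.1 ‹_›
    exact (hasProjectiveDimensionLE_tensor_succ_iff_of_exact (N := g.ker) (P := M →₀ R)
      g.ker.injective_subtype g.exact_subtype_ker_map
      (Finsupp.linearCombination_id_surjective R M) n).2 ih

theorem hasProjectiveDimensionLE_of_tensor [Module.Projective K L] {ρ : L →ₗ[K] K} (hρ : ρ 1 = 1)
    (n : ℕ) [HasProjectiveDimensionLE (ModuleCat.of (R ⊗[K] L) (M ⊗[K] L)) n] :
    HasProjectiveDimensionLE (ModuleCat.of R M) n := by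
  have := hasProjectiveDimensionLE_restrictScalars (R := R) (S := R ⊗[K] L) (M ⊗[K] L) n
  let i : M →ₗ[R] M ⊗[K] L := (AlgebraTensorModule.mk K R M L).flip 1
  let p : M ⊗[K] L →ₗ[R] M := AlgebraTensorModule.rid K R M ∘ₗ AlgebraTensorModule.lTensor R M ρ
  exact hasProjectiveDimensionLE_of_retract (i := i) (p := p)
    (LinearMap.ext fun m ↦ by simp [i, p, hρ]) n

end ProjectiveDimensionBaseChange

theorem exists_linearMap_one_eq_one (K L : Type*) [CommRing K] [Ring L] [Algebra K L]
    [Module.Projective K L] [Module.FaithfullyFlat K L] : ∃ ρ : L →ₗ[K] K, ρ 1 = 1 := by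
  let J : Ideal K := LinearMap.range (LinearMap.applyₗ (R := K) (M₂ := K) (1 : L))
  suffices h : J = ⊤ from (Ideal.eq_top_iff_one J).1 h
  -- If `J ≤ 𝔪`, the coordinates of `1` in a dual basis lie in `𝔪`, so `𝔪 L = L`.
  by_contra hJ
  obtain ⟨𝔪, h𝔪, hJ𝔪⟩ := Ideal.exists_le_maximal J hJ
  obtain ⟨s, hs⟩ := Module.projective_def'.1 ‹Module.Projective K L›
  refine Module.FaithfullyFlat.submodule_ne_top (M := L) h𝔪 (Submodule.eq_top_iff'.2 fun x ↦ ?_)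
  have hx : x = (s 1).sum fun y k ↦ k • (y * x) := by
    have := congr($hs 1 * x)
    simpa [Finsupp.linearCombination_apply, Finsupp.sum_mul] using this.symm
  rw [hx]
  exact Submodule.sum_mem _ fun y _ ↦ Submodule.smul_mem_smul
    (hJ𝔪 ⟨Finsupp.lapply y ∘ₗ s, rfl⟩) Submodule.mem_top

section AlgebraBaseChange

open MulOpposite

/-- Base change of algebras along `K → L` commutes with tensor products. -/
noncomputable def distribBaseChangeAlgEquiv (K L B C : Type*) [CommRing K] [CommRing L]
    [Algebra K L] [Ring B] [Algebra K B] [Ring C] [Algebra K C] :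
    L ⊗[K] (B ⊗[K] C) ≃ₐ[L] (L ⊗[K] B) ⊗[L] (L ⊗[K] C) :=
  .ofLinearEquiv (AlgebraTensorModule.distribBaseChange K L B C) rfl
    (LinearMap.map_mul_iff _ |>.mpr <| by ext; simp)

variable (K L A : Type*) [CommRing K] [CommRing L] [Algebra K L] [Ring A] [Algebra K A]

/-- Base change of algebras along `K → L` commutes with taking opposites. -/
noncomputable def opBaseChangeAlgEquiv : L ⊗[K] Aᵐᵒᵖ ≃ₐ[L] (A ⊗[K] L)ᵐᵒᵖ :=
  (Algebra.TensorProduct.congr (AlgEquiv.toOpposite L L) .refl).trans <|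
    (Algebra.TensorProduct.opAlgEquiv K L L A).trans (Algebra.TensorProduct.commRight K L A).op

/-- Base change of algebras along `K → L` commutes with taking enveloping algebras. -/
noncomputable def envBaseChangeAlgEquiv :
    (Aᵐᵒᵖ ⊗[K] A) ⊗[K] L ≃ₐ[L] (A ⊗[K] L)ᵐᵒᵖ ⊗[L] (A ⊗[K] L) :=
  (Algebra.TensorProduct.commRight K L (Aᵐᵒᵖ ⊗[K] A)).symm.trans <|
    (distribBaseChangeAlgEquiv K L Aᵐᵒᵖ A).trans <|
      Algebra.TensorProduct.congr (opBaseChangeAlgEquiv K L A)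
        (Algebra.TensorProduct.commRight K L A)

variable {K L A}

theorem envBaseChangeAlgEquiv_tmul (a : Aᵐᵒᵖ) (b : A) (l : L) :
    envBaseChangeAlgEquiv K L A ((a ⊗ₜ b) ⊗ₜ l) = op (a.unop ⊗ₜ l) ⊗ₜ (b ⊗ₜ 1) := rfl

theorem flat_baseChange_right [Module.Flat K A] : Module.Flat L (A ⊗[K] L) :=
  .of_linearEquiv (Algebra.TensorProduct.commRight K L A).toLinearEquiv.symm

theorem flat_of_flat_baseChange_right [Module.FaithfullyFlat K L] [Module.Flat L (A ⊗[K] L)] :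
    Module.Flat K A :=
  have : Module.Flat L (L ⊗[K] A) :=
    .of_linearEquiv (Algebra.TensorProduct.commRight K L A).toLinearEquiv
  Module.Flat.of_flat_tensorProduct K A L

end AlgebraBaseChange

section Smooth

variable {K L A : Type u} [CommRing K] [CommRing L] [Algebra K L] [Ring A] [Algebra K A]

instance isScalarTower_envModule : IsScalarTower K (Aᵐᵒᵖ ⊗[K] A) A where
  smul_assoc k t x := by
    induction t with
    | zero => simp only [smul_zero, Module.zero_smul]
    | add a b ha hb => simp only [smul_add, Module.add_smul, ha, hb]
    | tmul a b =>
      rw [smul_tmul', TensorProduct.Algebra.smul_def, TensorProduct.Algebra.smul_def, smul_assoc]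

theorem envBaseChangeAlgEquiv_smul (t : (Aᵐᵒᵖ ⊗[K] A) ⊗[K] L) (x : A ⊗[K] L) :
    envBaseChangeAlgEquiv K L A t • x = t • x := by
  refine smul_eq_tensorModule_smul
    (envBaseChangeAlgEquiv K L A).toAddEquiv.toAddMonoidHom (fun s l c m ↦ ?_) t x
  change envBaseChangeAlgEquiv K L A (s ⊗ₜ l) • _ = _
  induction s with
  | zero => simp only [zero_tmul, map_zero, Module.zero_smul]
  | add s t hs ht => simp only [add_tmul, map_add, Module.add_smul, hs, ht]
  | tmul a b =>
    rw [envBaseChangeAlgEquiv_tmul, TensorProduct.Algebra.smul_def, TensorProduct.Algebra.smul_def]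
    simp [mul_comm m l]

theorem hasProjectiveDimensionLE_env_baseChange_iff (n : ℕ) :
    HasProjectiveDimensionLE
        (ModuleCat.of ((A ⊗[K] L)ᵐᵒᵖ ⊗[L] (A ⊗[K] L)) (A ⊗[K] L)) n ↔
      HasProjectiveDimensionLE (ModuleCat.of ((Aᵐᵒᵖ ⊗[K] A) ⊗[K] L) (A ⊗[K] L)) n :=
  (hasProjectiveDimensionLE_iff_of_ringEquiv (envBaseChangeAlgEquiv K L A).toRingEquiv
    envBaseChangeAlgEquiv_smul n).symm

theorem smoothOver_iff_exists_hasProjectiveDimensionLE :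
    SmoothOver K A ↔
      Module.Flat K A ∧ ∃ n, HasProjectiveDimensionLE (ModuleCat.of (Aᵐᵒᵖ ⊗[K] A) A) n := by
  simp only [SmoothOver, hasProjDimLE_iff_hasProjectiveDimensionLE]

theorem smoothOver_baseChange [Module.Flat K L] (h : SmoothOver K A) :
    SmoothOver L (A ⊗[K] L) := by
  rw [smoothOver_iff_exists_hasProjectiveDimensionLE] at h ⊢
  obtain ⟨_, n, _⟩ := h
  exact ⟨flat_baseChange_right, n, (hasProjectiveDimensionLE_env_baseChange_iff n).2 <|
    hasProjectiveDimensionLE_tensor L n⟩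

theorem smoothOver_of_baseChange [Module.Projective K L] [Module.FaithfullyFlat K L]
    (h : SmoothOver L (A ⊗[K] L)) : SmoothOver K A := by
  rw [smoothOver_iff_exists_hasProjectiveDimensionLE] at h ⊢
  obtain ⟨_, n, h⟩ := h
  obtain ⟨ρ, hρ⟩ := exists_linearMap_one_eq_one K L
  have := (hasProjectiveDimensionLE_env_baseChange_iff n).1 h
  exact ⟨flat_of_flat_baseChange_right (L := L), n, hasProjectiveDimensionLE_of_tensor hρ n⟩

end Smooth

theorem smoothOver_iff_baseChange_algebraicClosure_general (K A L : Type u) [CommRing K] [Ring A]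
    [Algebra K A] [CommRing L] [Algebra K L] [Module.Projective K L] [Module.FaithfullyFlat K L] :
    SmoothOver K A ↔ SmoothOver L (A ⊗[K] L) :=
  ⟨smoothOver_baseChange, smoothOver_of_baseChange⟩

/-- A `K`-algebra `A` is smooth over `K` if and only if `A ⊗[K] Kbar` is smooth over the
algebraic closure `Kbar` of `K`. -/
theorem smoothOver_iff_baseChange_algebraicClosure
    (K A : Type u) [Field K] [Ring A] [Algebra K A] :
    SmoothOver K A ↔
      SmoothOver (AlgebraicClosure K) (A ⊗[K] AlgebraicClosure K) :=
  smoothOver_iff_baseChange_algebraicClosure_general K A (AlgebraicClosure K)
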